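/- Let R be a commutative ring and S a multiplicative subset of R with 0 ∉ S, viewed also as a multiplicative subset of R[x] via the constant embedding. Then S-gl.dim(R[x]) = S-gl.dim(R) + 1, where the S-global dimension of a ring A (with multiplicative subset S) is the least n ∈ ℕ ∪ {∞} such that Ext^{n+1}_A(M, N) is uniformly S-torsion for all A-modules M and N (and ∞ if no such n exists). -/

import Mathlib

open CategoryTheory

universe u

/-- The `S`-global dimension of a commutative ring `A` with multiplicative subset `S`:
the least `n ∈ ℕ∞` such that `Ext^{n+1}_A(M, N)` is uniformly `S`-torsion for all
`A`-modules `M, N` (`∞` if no such `n` exists). -/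
noncomputable def sGlDim (A : Type u) [CommRing A] (S : Submonoid A) : ℕ∞ :=
  sInf {c : ℕ∞ | ∃ n : ℕ, c = (n : ℕ∞) ∧ ∀ M N : ModuleCat.{u} A, ∃ s ∈ S,
    ∀ x : ((Ext A (ModuleCat.{u} A) (n + 1)).obj (Opposite.op M)).obj N, s • x = 0}

open Polynomial TensorProduct

theorem LinearEquiv.forall_smul_eq_zero_iff {A M N : Type*} [CommRing A]
    [AddCommGroup M] [Module A M] [AddCommGroup N] [Module A N] (e : M ≃ₗ[A] N) (a : A) :
    (∀ x : M, a • x = 0) ↔ ∀ y : N, a • y = 0 := by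
  rw [← e.toEquiv.forall_congr_right]
  refine forall_congr' fun x => ?_
  rw [LinearEquiv.coe_toEquiv, ← map_smul, e.map_eq_zero_iff]

/-- `a` annihilates `Ext^{n+1}(M, N)`, in terms of a projective resolution of `M`. -/
theorem ext_smul_eq_zero_iff {A : Type u} [CommRing A] {M N : ModuleCat.{u} A} (a : A)
    (n : ℕ) (P : ProjectiveResolution M) :
    (∀ x : ((Ext A (ModuleCat.{u} A) (n + 1)).obj (Opposite.op M)).obj N, a • x = 0) ↔
      ∀ f : P.complex.X (n + 1) ⟶ N, P.complex.d (n + 2) (n + 1) ≫ f = 0 →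
        ∃ g : P.complex.X n ⟶ N, P.complex.d (n + 1) n ≫ g = a • f := by
  let K := P.complex.linearYonedaObj A N
  let T := K.sc' n (n + 1) (n + 2)
  let e := (P.isoExt (R := A) (n + 1) N ≪≫
    ShortComplex.homologyMapIso (K.isoSc' n (n + 1) (n + 2) (by simp) (by simp)) ≪≫
    T.moduleCatHomologyIso).toLinearEquiv
  rw [e.forall_smul_eq_zero_iff]
  have key (f : P.complex.X (n + 1) ⟶ N) (hf : P.complex.d (n + 2) (n + 1) ≫ f = 0) :
      a • (Submodule.Quotient.mk (⟨f, hf⟩ : LinearMap.ker T.g.hom) :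
        LinearMap.ker T.g.hom ⧸ LinearMap.range T.moduleCatToCycles) = 0 ↔
        ∃ g : P.complex.X n ⟶ N, P.complex.d (n + 1) n ≫ g = a • f := by
    rw [← Submodule.Quotient.mk_smul, Submodule.Quotient.mk_eq_zero, LinearMap.mem_range]
    constructor
    · rintro ⟨g, hg⟩
      exact ⟨g, congrArg Subtype.val hg⟩
    · rintro ⟨g, hg⟩
      exact ⟨g, Subtype.ext hg⟩
  constructor
  · intro h f hf
    exact (key f hf).1 (h _)
  · intro h x
    obtain ⟨⟨f, hf⟩, rfl⟩ := Submodule.Quotient.mk_surjective _ x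
    exact (key f hf).2 (h f hf)

/-- `a` annihilates `Abelian.Ext M N (n + 1)`, in terms of a projective resolution of `M`. -/
theorem abelianExt_smul_eq_zero_iff {A : Type u} [CommRing A] {M N : ModuleCat.{u} A} (a : A)
    (n : ℕ) (P : ProjectiveResolution M) :
    (∀ x : Abelian.Ext M N (n + 1), a • x = 0) ↔
      ∀ f : P.complex.X (n + 1) ⟶ N, P.complex.d (n + 2) (n + 1) ≫ f = 0 →
        ∃ g : P.complex.X n ⟶ N, P.complex.d (n + 1) n ≫ g = a • f := by
  have key (f : P.complex.X (n + 1) ⟶ N) (hf : P.complex.d (n + 2) (n + 1) ≫ f = 0) :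
      a • P.extMk f (n + 2) rfl hf = 0 ↔
        ∃ g : P.complex.X n ⟶ N, P.complex.d (n + 1) n ≫ g = a • f := by
    rw [Abelian.Ext.smul_eq_comp_mk₀, P.extMk_comp_mk₀, P.extMk_eq_zero_iff _ _ _ _ n rfl]
    simp
  constructor
  · intro h f hf
    exact (key f hf).1 (h _)
  · intro h x
    obtain ⟨f, hf, rfl⟩ := P.extMk_surjective x (n + 2) rfl
    exact (key f hf).2 (h f hf)

theorem extendScalars_smul_iff {R A : Type u} [CommRing R] [CommRing A] {φ : R →+* A}
    (hφ : φ.Flat) (M : ModuleCat.{u} R) (N : ModuleCat.{u} A) (s : R) (n : ℕ) :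
    (∀ x : Abelian.Ext ((ModuleCat.extendScalars φ).obj M) N n, φ s • x = 0) ↔
      ∀ x : Abelian.Ext M ((ModuleCat.restrictScalars φ).obj N) n, s • x = 0 := by
  let adj := ModuleCat.extendRestrictScalarsAdj.{u} φ
  have hs (L : ModuleCat.{u} R) (f : (ModuleCat.extendScalars φ).obj L ⟶ N) :
      adj.homEquiv _ _ (φ s • f) = s • adj.homEquiv _ _ f := rfl
  have hz (L : ModuleCat.{u} R) (f : (ModuleCat.extendScalars φ).obj L ⟶ N) :
      adj.homEquiv _ _ f = 0 ↔ f = 0 := by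
    have : adj.homEquiv L N 0 = 0 := rfl
    rw [← this, (adj.homEquiv L N).apply_eq_iff_eq]
  cases n with
  | zero =>
    have h1 : (∀ x : Abelian.Ext ((ModuleCat.extendScalars φ).obj M) N 0, φ s • x = 0) ↔
        ∀ f : (ModuleCat.extendScalars φ).obj M ⟶ N, φ s • f = 0 := by
      rw [← (Abelian.Ext.linearEquiv₀ (R := A)).toEquiv.forall_congr_right]
      simp [← map_smul]
    have h2 : (∀ x : Abelian.Ext M ((ModuleCat.restrictScalars φ).obj N) 0, s • x = 0) ↔
        ∀ f : M ⟶ (ModuleCat.restrictScalars φ).obj N, s • f = 0 := by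
      rw [← (Abelian.Ext.linearEquiv₀ (R := R)).toEquiv.forall_congr_right]
      simp [← map_smul]
    rw [h1, h2, ← (adj.homEquiv M N).forall_congr_right]
    simp only [← hs, hz]
  | succ n =>
    have := ModuleCat.preservesFiniteLimits_extendScalars_of_flat hφ
    let P : ProjectiveResolution M := Classical.choice (HasProjectiveResolution.out)
    let F := ModuleCat.extendScalars.{u, u, u} φ
    have hl : F.IsLeftAdjoint := adj.isLeftAdjoint
    have : F.Additive := Functor.additive_of_preserves_binary_products _
    have : Limits.PreservesFiniteColimits F := inferInstance
    have : F.PreservesHomology := inferInstance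
    have : F.PreservesProjectiveObjects := ⟨fun hP => adj.map_projective _ hP⟩
    let Q := F.mapProjectiveResolution P
    rw [abelianExt_smul_eq_zero_iff _ _ P, abelianExt_smul_eq_zero_iff _ _ Q]
    change (∀ f : F.obj (P.complex.X (n + 1)) ⟶ N,
      F.map (P.complex.d (n + 2) (n + 1)) ≫ f = 0 →
        ∃ g : F.obj (P.complex.X n) ⟶ N, F.map (P.complex.d (n + 1) n) ≫ g = φ s • f) ↔ _
    rw [← (adj.homEquiv _ N).forall_congr_right]
    refine forall_congr' fun f => imp_congr ?_ ?_
    · rw [← adj.homEquiv_naturality_left, hz]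
    · rw [← (adj.homEquiv _ N).exists_congr_right]
      refine exists_congr fun g => ?_
      rw [← adj.homEquiv_naturality_left, ← hs, (adj.homEquiv _ N).apply_eq_iff_eq]

theorem smul_ext_of_iso {A : Type u} [CommRing A] {M M' N N' : ModuleCat.{u} A} (i : M ≅ M')
    (j : N ≅ N') (a : A) (n : ℕ) (h : ∀ x : Abelian.Ext M N n, a • x = 0)
    (x : Abelian.Ext M' N' n) : a • x = 0 := by
  have := h ((Abelian.Ext.mk₀ i.hom).comp (x.comp (.mk₀ j.inv) (add_zero n)) (zero_add n))
  rw [← Abelian.Ext.comp_smul, ← Abelian.Ext.smul_comp] at this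
  apply_fun (fun y => (Abelian.Ext.mk₀ i.inv).comp
    (y.comp (.mk₀ j.hom) (add_zero n)) (zero_add n)) at this
  simpa using this

section
variable {R : Type u} [CommRing R]

/-- The `R[X]`-linear extension to `R[X] ⊗ M` of an `R`-linear map from `M` to an `R[X]`-module. -/
noncomputable def tensorLift {M : ModuleCat.{u} R} {N : ModuleCat.{u} R[X]}
    (g : M ⟶ (ModuleCat.restrictScalars C).obj N) : ModuleCat.of R[X] (R[X] ⊗[R] M) ⟶ N :=
  letI : Module R N := Module.compHom N (C : R →+* R[X])
  haveI : IsScalarTower R R[X] N := ⟨fun r p e => by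
    rw [Polynomial.smul_eq_C_mul, mul_smul]; rfl⟩
  let l : M →ₗ[R] N := g.hom
  ModuleCat.ofHom (LinearMap.liftBaseChange R[X] l)

lemma tensorLift_one_tmul {M : ModuleCat.{u} R} {N : ModuleCat.{u} R[X]}
    (g : M ⟶ (ModuleCat.restrictScalars C).obj N) (m : M) :
    tensorLift g ((1 : R[X]) ⊗ₜ[R] m) = g m :=
  one_smul R[X] (show N from g m)

/-- The canonical `R`-linear map from `M` to the restriction of scalars of `R[X] ⊗ M`. -/
noncomputable def tensorUnit (M : ModuleCat.{u} R) :
    M ⟶ (ModuleCat.restrictScalars (C : R →+* R[X])).obj (ModuleCat.of R[X] (R[X] ⊗[R] M)) :=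
  ModuleCat.ofHom
    (Y := (ModuleCat.restrictScalars (C : R →+* R[X])).obj (ModuleCat.of R[X] (R[X] ⊗[R] M)))
    { toFun := fun m => (1 : R[X]) ⊗ₜ[R] m
      map_add' := TensorProduct.tmul_add _
      map_smul' := fun r m => by
        change (1 : R[X]) ⊗ₜ[R] (r • m) = (C r : R[X]) • ((1 : R[X]) ⊗ₜ[R] m)
        rw [TensorProduct.smul_tmul', ← TensorProduct.smul_tmul, Polynomial.smul_eq_C_mul,
          smul_eq_mul] }

/-- Extension of scalars along `C : R →+* R[X]` is the tensor product with `R[X]`. -/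
noncomputable def extendScalarsCIso (M : ModuleCat.{u} R) :
    (ModuleCat.extendScalars (C : R →+* R[X])).obj M ≅ ModuleCat.of R[X] (R[X] ⊗[R] M) where
  hom := ((ModuleCat.extendRestrictScalarsAdj.{u} C).homEquiv _ _).symm (tensorUnit M)
  inv := tensorLift ((ModuleCat.extendRestrictScalarsAdj.{u} C).unit.app M)
  hom_inv_id := by
    apply ((ModuleCat.extendRestrictScalarsAdj.{u} C).homEquiv _ _).injective
    rw [Adjunction.homEquiv_naturality_right, Equiv.apply_symm_apply]
    ext m
    exact tensorLift_one_tmul ((ModuleCat.extendRestrictScalarsAdj.{u} C).unit.app M) m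
  inv_hom_id := by
    let adj := ModuleCat.extendRestrictScalarsAdj.{u} (C : R →+* R[X])
    have h (m : M) : (tensorLift (adj.unit.app M) ≫ (adj.homEquiv _ _).symm (tensorUnit M))
        ((1 : R[X]) ⊗ₜ[R] m) = (1 : R[X]) ⊗ₜ[R] m := by
      rw [ModuleCat.comp_apply, tensorLift_one_tmul]
      exact congrArg (fun f => f m) ((adj.homEquiv _ _).apply_symm_apply (tensorUnit M))
    refine ModuleCat.hom_ext (TensorProduct.AlgebraTensorModule.curry_injective ?_)
    ext m
    exact h m

variable (M : Type u) [AddCommGroup M] [Module R M] [Module R[X] M] [IsScalarTower R R[X] M]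

/-- Multiplication by `X` on an `R[X]`-module, as an `R`-linear map. -/
noncomputable def xAct : M →ₗ[R] M := (LinearMap.lsmul R[X] M X).restrictScalars R

/-- The map `p ⊗ m ↦ X p ⊗ m - p ⊗ X m`. -/
noncomputable def charMap : R[X] ⊗[R] M →ₗ[R[X]] R[X] ⊗[R] M :=
  (X : R[X]) • LinearMap.id - (xAct M).baseChange R[X]

@[simp] lemma charMap_tmul (p : R[X]) (m : M) :
    charMap M (p ⊗ₜ[R] m) = (X * p) ⊗ₜ[R] m - p ⊗ₜ[R] ((X : R[X]) • m) := rfl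

lemma charMap_eq_smul_id (h : ∀ m : M, (X : R[X]) • m = 0) :
    charMap (R := R) M = (X : R[X]) • LinearMap.id := by
  ext m
  simp [TensorProduct.smul_tmul', h]

/-- The action map `p ⊗ m ↦ p • m`. -/
noncomputable def actMap : R[X] ⊗[R] M →ₗ[R[X]] M :=
  TensorProduct.AlgebraTensorModule.lift ((LinearMap.lsmul R[X] M).restrictScalars₁₂ R[X] R)

@[simp] lemma actMap_tmul (p : R[X]) (m : M) : actMap M (p ⊗ₜ[R] m) = p • m := rfl

lemma actMap_surjective : Function.Surjective (actMap (R := R) M) := fun m => ⟨1 ⊗ₜ m, by simp⟩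

lemma actMap_comp_charMap : actMap (R := R) M ∘ₗ charMap M = 0 := by
  ext m; simp

lemma sub_mem_range_charMap (p : R[X]) (m : M) :
    p ⊗ₜ[R] m - (1 : R[X]) ⊗ₜ[R] (p • m) ∈ LinearMap.range (charMap (R := R) M) := by
  induction p using Polynomial.induction_on generalizing m with
  | C r =>
    have : (C r : R[X]) ⊗ₜ[R] m = 1 ⊗ₜ (C r • m) := by
      rw [← algebraMap_eq, algebraMap_smul, ← TensorProduct.smul_tmul,
        Algebra.algebraMap_eq_smul_one]
    simp [this]
  | add p q hp hq =>
    convert add_mem (hp m) (hq m) using 1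
    rw [add_tmul, add_smul, tmul_add]; abel
  | monomial n r h =>
    convert add_mem (LinearMap.mem_range_self (charMap M) ((C r * X ^ n) ⊗ₜ[R] m))
      (h (X • m)) using 1
    rw [charMap_tmul, smul_smul, sub_add_sub_cancel]
    ring_nf

lemma exact_charMap_actMap : Function.Exact (charMap (R := R) M) (actMap M) := by
  intro t
  constructor
  · intro ht
    have key : ∀ t : R[X] ⊗[R] M, t - 1 ⊗ₜ (actMap M t) ∈ LinearMap.range (charMap (R := R) M) := by
      intro t
      induction t with
      | zero => simp
      | tmul p m => exact sub_mem_range_charMap M p m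
      | add x y hx hy =>
        convert add_mem hx hy using 1
        rw [map_add, tmul_add]; abel
    simpa [ht] using key t
  · rintro ⟨y, rfl⟩
    exact LinearMap.congr_fun (actMap_comp_charMap M) y

lemma charMap_injective : Function.Injective (charMap (R := R) M) := by
  let σ : R[X] ⊗[R] M →ₗ[R] R[X] ⊗[R] M := TensorProduct.lift <|
    Polynomial.lsum fun n => LinearMap.toSpanSingleton R _
      (∑ i ∈ Finset.range n, (TensorProduct.mk R R[X] M (X ^ i)) ∘ₗ (xAct M) ^ (n - 1 - i))
  have hσ (n : ℕ) (m : M) : σ ((X ^ n : R[X]) ⊗ₜ m) =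
     ∑ i ∈ Finset.range n, (X ^ i : R[X]) ⊗ₜ[R] ((xAct (R := R) M ^ (n - 1 - i)) m) := by
    simp [σ, Polynomial.lsum_apply, X_pow_eq_monomial, sum_monomial_index, LinearMap.sum_apply]
  have hσc : σ ∘ₗ (charMap M).restrictScalars R = LinearMap.id := by
    ext n m
    simp only [LinearMap.coe_comp, Function.comp_apply, AlgebraTensorModule.curry_apply,
      TensorProduct.curry_apply, LinearMap.coe_restrictScalars, LinearMap.id_apply,
      ← X_pow_eq_monomial, charMap_tmul, map_sub]
    rw [← pow_succ', hσ, hσ, Finset.sum_range_succ]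
    have h : ∀ i ∈ Finset.range n, (X ^ i : R[X]) ⊗ₜ[R] ((xAct (R := R) M ^ (n + 1 - 1 - i)) m) =
        (X ^ i : R[X]) ⊗ₜ[R] ((xAct (R := R) M ^ (n - 1 - i)) ((X : R[X]) • m)) := by
      intro i hi
      have : n + 1 - 1 - i = (n - 1 - i) + 1 := by have := Finset.mem_range.1 hi; omega
      rw [this, pow_succ]
      rfl
    rw [Finset.sum_congr rfl h]
    simp
  exact Function.LeftInverse.injective (LinearMap.congr_fun hσc)

/-- The characteristic sequence `0 → R[X] ⊗ M → R[X] ⊗ M → M → 0` of an `R[X]`-module `M`. -/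
noncomputable def charShortComplex : ShortComplex (ModuleCat.{u} R[X]) :=
  ShortComplex.mk (ModuleCat.ofHom (charMap (R := R) M)) (ModuleCat.ofHom (actMap M))
    (ModuleCat.hom_ext (actMap_comp_charMap M))

lemma charShortComplex_shortExact : (charShortComplex (R := R) M).ShortExact where
  exact := (ShortComplex.ShortExact.moduleCat_exact_iff_function_exact _).2 (exact_charMap_actMap M)
  mono_f := (ModuleCat.mono_iff_injective _).2 (charMap_injective M)
  epi_g := (ModuleCat.epi_iff_surjective _).2 (actMap_surjective M)

lemma polynomial_C_flat : (C : R →+* R[X]).Flat := by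
  rw [← algebraMap_eq, RingHom.flat_algebraMap_iff]
  infer_instance

theorem smul_ext_tensor_iff {M : ModuleCat.{u} R} {N : ModuleCat.{u} R[X]} (s : R) (n : ℕ) :
    (∀ x : Abelian.Ext (ModuleCat.of R[X] (R[X] ⊗[R] M)) N n, C s • x = 0) ↔
      ∀ x : Abelian.Ext M ((ModuleCat.restrictScalars C).obj N) n, s • x = 0 := by
  rw [← extendScalars_smul_iff polynomial_C_flat]
  exact ⟨smul_ext_of_iso (extendScalarsCIso M).symm (Iso.refl N) _ _,
    smul_ext_of_iso (extendScalarsCIso M) (Iso.refl N) _ _⟩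

/-- The characteristic sequence of `M`, in terms of restriction of scalars; if `X` acts as zero
on `M`, its first map is multiplication by `X`. -/
theorem exists_shortExact (M : ModuleCat.{u} R[X]) :
    ∃ (f : ModuleCat.of R[X] (R[X] ⊗[R] (ModuleCat.restrictScalars (C : R →+* R[X])).obj M) ⟶
        ModuleCat.of R[X] (R[X] ⊗[R] (ModuleCat.restrictScalars (C : R →+* R[X])).obj M))
      (g : ModuleCat.of R[X] (R[X] ⊗[R] (ModuleCat.restrictScalars (C : R →+* R[X])).obj M) ⟶ M)
      (w : f ≫ g = 0), (ShortComplex.mk f g w).ShortExact ∧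
        ((∀ m : M, (X : R[X]) • m = 0) → f = (X : R[X]) • 𝟙 _) := by
  let : Module R M := Module.compHom M (C : R →+* R[X])
  have : IsScalarTower R R[X] M := ⟨fun r p e => by
    rw [Polynomial.smul_eq_C_mul, mul_smul]; rfl⟩
  let T := charShortComplex (R := R) M
  refine ⟨T.f, T.g, T.zero, charShortComplex_shortExact M, fun h => ?_⟩
  exact ModuleCat.hom_ext (charMap_eq_smul_id M h)

theorem smul_ext_succ_of_restrictScalars {M N : ModuleCat.{u} R[X]} {s t : R} {n : ℕ}
    (hs : ∀ x : Abelian.Ext ((ModuleCat.restrictScalars C).obj M)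
      ((ModuleCat.restrictScalars C).obj N) n, s • x = 0)
    (ht : ∀ x : Abelian.Ext ((ModuleCat.restrictScalars C).obj M)
      ((ModuleCat.restrictScalars C).obj N) (n + 1), t • x = 0)
    (x : Abelian.Ext M N (n + 1)) : C (s * t) • x = 0 := by
  rw [← smul_ext_tensor_iff] at hs ht
  obtain ⟨f, g, w, hS, -⟩ := exists_shortExact M
  have h1 := ht ((Abelian.Ext.mk₀ g).comp x (zero_add _))
  rw [← Abelian.Ext.comp_smul] at h1
  obtain ⟨y, hy⟩ := Abelian.Ext.contravariant_sequence_exact₃ hS N _ h1 (add_comm 1 n)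
  rw [C_mul, mul_smul, ← hy, ← Abelian.Ext.comp_smul, hs, Abelian.Ext.comp_zero]

theorem smul_ext_restrictScalars_of_succ {M N : ModuleCat.{u} R[X]} {s : R} {n : ℕ}
    (hM : ∀ m : M, (X : R[X]) • m = 0) (hN : ∀ m : N, (X : R[X]) • m = 0)
    (hs : ∀ x : Abelian.Ext M N (n + 1), C s • x = 0)
    (x : Abelian.Ext ((ModuleCat.restrictScalars C).obj M)
      ((ModuleCat.restrictScalars C).obj N) n) : s • x = 0 := by
  revert x
  rw [← smul_ext_tensor_iff]
  intro y
  obtain ⟨f, g, w, hS, hf⟩ := exists_shortExact M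
  have h1 := hs (hS.extClass.comp y (add_comm 1 n))
  rw [← Abelian.Ext.comp_smul] at h1
  obtain ⟨z, hz⟩ := Abelian.Ext.contravariant_sequence_exact₁ hS N _ _ h1
  have hN' : (X : R[X]) • 𝟙 N = 0 := ModuleCat.hom_ext (LinearMap.ext hN)
  rw [← hz]
  dsimp only
  rw [hf hM, Abelian.Ext.mk₀_smul, Abelian.Ext.smul_comp, Abelian.Ext.mk₀_id_comp,
    Abelian.Ext.smul_eq_comp_mk₀, hN', Abelian.Ext.mk₀_zero, Abelian.Ext.comp_zero]

/-- An `R`-module is the restriction of an `R[X]`-module on which `X` acts as zero. -/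
theorem exists_restrictScalars_iso (M : ModuleCat.{u} R) :
    ∃ M' : ModuleCat.{u} R[X], (∀ m : M', (X : R[X]) • m = 0) ∧
      Nonempty ((ModuleCat.restrictScalars (C : R →+* R[X])).obj M' ≅ M) := by
  refine ⟨(ModuleCat.restrictScalars (evalRingHom (0 : R))).obj M, fun m => ?_, ⟨?_⟩⟩
  · change (evalRingHom (0 : R) X) • (show M from m) = 0
    rw [coe_evalRingHom, eval_X, zero_smul]
  · exact ((ModuleCat.restrictScalarsComp' (C : R →+* R[X]) (evalRingHom 0) (RingHom.id R)
      (by ext; simp)).symm.app M) ≪≫ (ModuleCat.restrictScalarsId R).app M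
end

theorem sGlDim_eq (A : Type u) [CommRing A] (S : Submonoid A) :
    sGlDim A S = sInf {c : ℕ∞ | ∃ n : ℕ, c = (n : ℕ∞) ∧ ∀ M N : ModuleCat.{u} A, ∃ s ∈ S,
      ∀ x : Abelian.Ext M N (n + 1), s • x = 0} := by
  have h (M N : ModuleCat.{u} A) (s : A) (n : ℕ) :
      (∀ x : ((Ext A (ModuleCat.{u} A) (n + 1)).obj (Opposite.op M)).obj N, s • x = 0) ↔
        ∀ x : Abelian.Ext M N (n + 1), s • x = 0 := by
    let P : ProjectiveResolution M := Classical.choice HasProjectiveResolution.out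
    rw [ext_smul_eq_zero_iff s n P, abelianExt_smul_eq_zero_iff s n P]
  simp only [sGlDim, h]

theorem uniformlyTorsion_succ {A : Type u} [CommRing A] {S : Submonoid A} {n : ℕ}
    (h : ∀ M N : ModuleCat.{u} A, ∃ s ∈ S, ∀ x : Abelian.Ext M N n, s • x = 0)
    (M N : ModuleCat.{u} A) : ∃ s ∈ S, ∀ x : Abelian.Ext M N (n + 1), s • x = 0 := by
  have : Projective M.projectiveShortComplex.X₂ :=
    ModuleCat.projective_of_free (Module.Free.chooseBasis A M.projectiveShortComplex.X₂)
  have hS := M.shortExact_projectiveShortComplex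
  obtain ⟨s, hs, h⟩ := h M.projectiveShortComplex.X₁ N
  refine ⟨s, hs, fun x => ?_⟩
  obtain ⟨y, rfl⟩ := precomp_extClass_surjective_of_projective_X₂ N hS n x
  have hy := Abelian.Ext.comp_smul hS.extClass y (add_comm 1 n) s
  rw [h, Abelian.Ext.comp_zero] at hy
  exact hy.symm

/-- If `0 ∉ S`, then `S`-gl.dim`(R[x]) = S`-gl.dim`(R) + 1`, where `S` is viewed as a
multiplicative subset of `R[x]` via the constant embedding. -/
theorem stmt19 {R : Type u} [CommRing R] (S : Submonoid R) (h0 : (0 : R) ∉ S) :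
    sGlDim (Polynomial R)
        (S.map (Polynomial.C : R →+* Polynomial R).toMonoidHom) =
      sGlDim R S + 1 := by
  rw [sGlDim_eq, sGlDim_eq]
  have lower (n : ℕ) (h : ∀ M N : ModuleCat.{u} R[X],
      ∃ s ∈ S.map (C : R →+* R[X]).toMonoidHom, ∀ x : Abelian.Ext M N (n + 1), s • x = 0)
      (M N : ModuleCat.{u} R) : ∃ s ∈ S, ∀ x : Abelian.Ext M N n, s • x = 0 := by
    obtain ⟨M', hM', ⟨i⟩⟩ := exists_restrictScalars_iso M
    obtain ⟨N', hN', ⟨j⟩⟩ := exists_restrictScalars_iso N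
    obtain ⟨_, ⟨s, hs, rfl⟩, h⟩ := h M' N'
    exact ⟨s, hs, smul_ext_of_iso i j s n (smul_ext_restrictScalars_of_succ hM' hN' h)⟩
  apply le_antisymm
  · generalize hc : sInf {c : ℕ∞ | ∃ n : ℕ, c = (n : ℕ∞) ∧ ∀ M N : ModuleCat.{u} R, ∃ s ∈ S,
      ∀ x : Abelian.Ext M N (n + 1), s • x = 0} = c
    obtain hT | hT := Set.eq_empty_or_nonempty {c : ℕ∞ | ∃ n : ℕ, c = (n : ℕ∞) ∧
      ∀ M N : ModuleCat.{u} R, ∃ s ∈ S, ∀ x : Abelian.Ext M N (n + 1), s • x = 0}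
    · rw [hT, sInf_empty] at hc
      simp [← hc]
    · have hm := csInf_mem hT
      rw [hc] at hm
      obtain ⟨n, rfl, h⟩ := hm
      refine sInf_le ⟨n + 1, by push_cast; rfl, fun M N => ?_⟩
      obtain ⟨s, hs, h1⟩ := h ((ModuleCat.restrictScalars C).obj M)
        ((ModuleCat.restrictScalars C).obj N)
      obtain ⟨t, ht, h2⟩ := uniformlyTorsion_succ h ((ModuleCat.restrictScalars C).obj M)
        ((ModuleCat.restrictScalars C).obj N)
      exact ⟨C (s * t), ⟨s * t, S.mul_mem hs ht, rfl⟩, smul_ext_succ_of_restrictScalars h1 h2⟩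
  · refine le_sInf ?_
    rintro _ ⟨n, rfl, h⟩
    cases n with
    | zero =>
      obtain ⟨s, hs, h⟩ := lower 0 h (ModuleCat.of R R) (ModuleCat.of R R)
      have h1 := h (.mk₀ (𝟙 _))
      rw [← Abelian.Ext.mk₀_smul, Abelian.Ext.mk₀_eq_zero_iff] at h1
      have h2 : s • (1 : R) = 0 := congrArg (fun f => f.hom (1 : R)) h1
      rw [smul_eq_mul, mul_one] at h2
      exact absurd (h2 ▸ hs) h0
    | succ n =>
      push_cast
      gcongr
      exact sInf_le ⟨n, rfl, lower (n + 1) h⟩
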